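/- arXiv:1208.2084 — 9 statements merged into one kernel-verified Lean document; each statement's English description precedes it below -/
import Mathlib

section
/- Let G be a group, P and P' subgroups of G, Q a subgroup of P', and w ∈ G. Then the map sending the double coset (w⁻¹Pw ∩ P') a Q to the double coset P(wa)Q, for a ∈ P', is a well-defined bijection from the double coset space (w⁻¹Pw ∩ P')\P'/Q onto the set of (P,Q)-double cosets contained in PwP', i.e. onto P\PwP'/Q. -/
open Pointwise

theorem dc_eq_iff {G : Type*} [Group G] (H K : Subgroup G) (a b : G) :
    (H : Set G) * {a} * K = (H : Set G) * {b} * K ↔ ∃ h ∈ H, ∃ k ∈ K, b = h * a * k := by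
  constructor
  · intro h
    have hb : b ∈ DoubleCoset.doubleCoset a (H : Set G) K := by
      have := DoubleCoset.mem_doubleCoset_self H K b
      unfold DoubleCoset.doubleCoset at this ⊢
      rwa [h]
    obtain ⟨x, hx, y, hy, e⟩ := DoubleCoset.mem_doubleCoset.1 hb
    exact ⟨x, hx, y, hy, e⟩
  · rintro ⟨h, hh, k, hk, e⟩
    exact (DoubleCoset.doubleCoset_eq_of_mem
      (DoubleCoset.mem_doubleCoset.2 ⟨h, hh, k, hk, e⟩)).symm

theorem dc_key {G : Type*} [Group G]
    (P P' Q : Subgroup G) (hQ : Q ≤ P') (w a b : G) (ha : a ∈ P') (hb : b ∈ P') :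
    ({x : G | w * x * w⁻¹ ∈ P} ∩ (P' : Set G)) * {a} * (Q : Set G)
      = ({x : G | w * x * w⁻¹ ∈ P} ∩ (P' : Set G)) * {b} * (Q : Set G) ↔
    (P : Set G) * {w * a} * (Q : Set G) = (P : Set G) * {w * b} * (Q : Set G) := by
  have hS : ({x : G | w * x * w⁻¹ ∈ P} ∩ (P' : Set G))
      = ((P.comap (MulAut.conj w).toMonoidHom ⊓ P' : Subgroup G) : Set G) := by
    ext x; simp
  rw [hS, dc_eq_iff, dc_eq_iff]
  constructor
  · rintro ⟨h, hh, k, hk, e⟩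
    have h1 : w * h * w⁻¹ ∈ P := by simpa using hh.1
    exact ⟨_, h1, k, hk, by rw [e]; group⟩
  · rintro ⟨p, hp, k, hk, e⟩
    have e' : b = w⁻¹ * p * w * a * k := by
      rw [eq_comm, ← mul_right_inj w, e]; group
    refine ⟨w⁻¹ * p * w, ⟨?_, ?_⟩, k, hk, e'⟩
    · simpa [mul_assoc] using hp
    · have : w⁻¹ * p * w = b * k⁻¹ * a⁻¹ := by rw [e']; group
      rw [this]
      exact P'.mul_mem (P'.mul_mem hb (P'.inv_mem (hQ hk))) (P'.inv_mem ha)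

/-- Let `G` be a group, `P, P'` subgroups of `G`, `Q` a subgroup of `P'`,
and `w ∈ G`.  The map sending the double coset `(w⁻¹Pw ∩ P') a Q` to `P (wa) Q` (for
`a ∈ P'`), where `w⁻¹Pw = {x | w x w⁻¹ ∈ P}`, is a well-defined bijection from the
double coset space `(w⁻¹Pw ∩ P')\P'/Q` onto the set of `(P,Q)`-double cosets contained
in `P w P'`. -/
theorem double_coset_translate_equiv {G : Type*} [Group G]
    (P P' Q : Subgroup G) (hQ : Q ≤ P') (w : G) :
    ∃ e : {d : Set G | ∃ a ∈ P', d = ({x : G | w * x * w⁻¹ ∈ P} ∩ ↑P') * {a} * ↑Q} ≃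
          {d : Set G | ∃ x ∈ ((↑P : Set G) * {w} * ↑P'), d = (↑P : Set G) * {x} * ↑Q},
      ∀ a (ha : a ∈ P'),
        (e ⟨({x : G | w * x * w⁻¹ ∈ P} ∩ ↑P') * {a} * ↑Q, ⟨a, ha, rfl⟩⟩ : Set G)
          = (↑P : Set G) * {w * a} * ↑Q := by
  classical
  let f : {d : Set G | ∃ a ∈ P', d = ({x : G | w * x * w⁻¹ ∈ P} ∩ ↑P') * {a} * ↑Q} →
      {d : Set G | ∃ x ∈ ((↑P : Set G) * {w} * ↑P'), d = (↑P : Set G) * {x} * ↑Q} :=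
    fun d => ⟨(↑P : Set G) * {w * d.2.choose} * ↑Q, w * d.2.choose,
      Set.mul_mem_mul (by simp) d.2.choose_spec.1, rfl⟩
  have hf : ∀ a (ha : a ∈ P'),
      (f ⟨({x : G | w * x * w⁻¹ ∈ P} ∩ ↑P') * {a} * ↑Q, ⟨a, ha, rfl⟩⟩ : Set G)
          = (↑P : Set G) * {w * a} * ↑Q := by
    intro a ha
    have h : ∃ c ∈ P', ({x : G | w * x * w⁻¹ ∈ P} ∩ (P' : Set G)) * {a} * (Q : Set G)
        = ({x : G | w * x * w⁻¹ ∈ P} ∩ ↑P') * {c} * ↑Q := ⟨a, ha, rfl⟩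
    exact ((dc_key P P' Q hQ w _ _ ha h.choose_spec.1).1 h.choose_spec.2).symm
  refine ⟨Equiv.ofBijective f ⟨?_, ?_⟩, hf⟩
  · rintro ⟨_, a, ha, rfl⟩ ⟨_, b, hb, rfl⟩ h
    have h2 := congrArg Subtype.val h
    rw [hf a ha, hf b hb] at h2
    exact Subtype.ext ((dc_key P P' Q hQ w a b ha hb).2 h2)
  · rintro ⟨_, x, hx, rfl⟩
    obtain ⟨y, hy, b, hb, rfl⟩ := Set.mem_mul.1 hx
    obtain ⟨p, hp, z, hz, rfl⟩ := Set.mem_mul.1 hy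
    obtain rfl : z = w := hz
    refine ⟨⟨_, b, hb, rfl⟩, Subtype.ext ((hf b hb).trans ?_)⟩
    exact (dc_eq_iff P Q _ _).2 ⟨p, hp, 1, Q.one_mem, by group⟩
end

section
/- Let G be a group that is the internal semidirect product of a subgroup L₁ and a normal subgroup U₁ (so U₁ is normal in G, L₁ ∩ U₁ = {1}, and L₁U₁ = G). Let L₂ and L₃ be subgroups of L₁ and let U₂ be a subgroup of U₁ such that L₂ normalizes U₂ (so L₂U₂ is a subgroup of G). Then the map sending the double coset L₂ l L₃ to the double coset (L₂U₂) l (L₃U₁), for l ∈ L₁, is a well-defined bijection from L₂\L₁/L₃ onto (L₂U₂)\G/(L₃U₁). -/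
open Pointwise

/-- Let `G` be the internal semidirect product of a subgroup `L₁` and a
normal subgroup `U₁`.  Let `L₂, L₃` be subgroups of `L₁` and `U₂ ≤ U₁` a subgroup
normalized by `L₂`.  Then the map sending the double coset `L₂ l L₃` to
`(L₂U₂) l (L₃U₁)` (for `l ∈ L₁`) is a well-defined bijection from `L₂\L₁/L₃` onto
`(L₂U₂)\G/(L₃U₁)`. -/
theorem double_coset_semidirect_equiv' {G : Type*} [Group G]
    (L₁ U₁ L₂ L₃ U₂ : Subgroup G)
    (hN : U₁.Normal) (hInt : L₁ ⊓ U₁ = ⊥)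
    (hGen : (↑L₁ : Set G) * (↑U₁ : Set G) = Set.univ)
    (h₂ : L₂ ≤ L₁) (h₃ : L₃ ≤ L₁) (hU₂ : U₂ ≤ U₁)
    (hNorm : ∀ l ∈ L₂, ∀ u ∈ U₂, l * u * l⁻¹ ∈ U₂) :
    ∃ e : {d : Set G | ∃ l ∈ L₁, d = (↑L₂ : Set G) * {l} * ↑L₃} ≃
          {d : Set G | ∃ x : G,
            d = ((↑L₂ : Set G) * (↑U₂ : Set G)) * {x} * ((↑L₃ : Set G) * (↑U₁ : Set G))},
      ∀ l (hl : l ∈ L₁),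
        (e ⟨(↑L₂ : Set G) * {l} * ↑L₃, ⟨l, hl, rfl⟩⟩ : Set G)
          = ((↑L₂ : Set G) * (↑U₂ : Set G)) * {l} * ((↑L₃ : Set G) * (↑U₁ : Set G)) := by
  have comm : ∀ s : Set G, s * (U₁ : Set G) = (U₁ : Set G) * s :=
    fun s => Subgroup.set_mul_normal_comm s U₁
  have hUU : (U₂ : Set G) * (U₁ : Set G) = U₁ := by
    ext g
    constructor
    · rintro ⟨a, ha, b, hb, rfl⟩
      exact U₁.mul_mem (hU₂ ha) hb
    · intro hg
      exact ⟨1, U₂.one_mem, g, hg, one_mul g⟩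
  have key : ∀ x : G, ((L₂ : Set G) * (U₂ : Set G)) * {x} * ((L₃ : Set G) * (U₁ : Set G))
      = (L₂ : Set G) * {x} * L₃ * U₁ := by
    intro x
    calc ((L₂ : Set G) * (U₂ : Set G)) * {x} * ((L₃ : Set G) * (U₁ : Set G))
        = (L₂ : Set G) * ((U₂ : Set G) * (({x} * (L₃ : Set G)) * (U₁ : Set G))) := by
          simp only [mul_assoc]
      _ = (L₂ : Set G) * (((U₂ : Set G) * (U₁ : Set G)) * ({x} * (L₃ : Set G))) := by
          rw [comm ({x} * (L₃ : Set G))]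
          simp only [mul_assoc]
      _ = (L₂ : Set G) * {x} * L₃ * U₁ := by
          rw [hUU, ← comm]
          simp only [mul_assoc]
  have habs : ∀ l u : G, u ∈ U₁ →
      (L₂ : Set G) * {l * u} * L₃ * U₁ = (L₂ : Set G) * {l} * L₃ * U₁ := by
    intro l u hu
    have e1 : ({u} : Set G) * (U₁ : Set G) = U₁ := Subgroup.singleton_mul_subgroup hu
    rw [← Set.singleton_mul_singleton]
    calc (L₂ : Set G) * ({l} * {u}) * L₃ * U₁
        = (L₂ : Set G) * {l} * ({u} * ((L₃ : Set G) * U₁)) := by simp only [mul_assoc]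
      _ = (L₂ : Set G) * {l} * (({u} * (U₁ : Set G)) * L₃) := by
          rw [comm (L₃ : Set G)]
          simp only [mul_assoc]
      _ = (L₂ : Set G) * {l} * L₃ * U₁ := by
          rw [e1, ← comm]
          simp only [mul_assoc]
  have hsub : ∀ l ∈ L₁, (L₂ : Set G) * {l} * L₃ ⊆ L₁ := by
    rintro l hl _ ⟨_, ⟨a, ha, b, hb, rfl⟩, c, hc, rfl⟩
    obtain rfl : b = l := hb
    exact L₁.mul_mem (L₁.mul_mem (h₂ ha) hl) (h₃ hc)
  have hinter : ∀ D : Set G, D ⊆ L₁ → (D * (U₁ : Set G)) ∩ L₁ = D := by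
    intro D hD
    ext g
    constructor
    · rintro ⟨⟨d, hd, u, hu, rfl⟩, hg⟩
      have hu1 : u ∈ L₁ := (L₁.mul_mem_cancel_left (hD hd)).1 hg
      have hu2 : u ∈ L₁ ⊓ U₁ := ⟨hu1, hu⟩
      rw [hInt, Subgroup.mem_bot] at hu2
      subst hu2
      simpa using hd
    · intro hg
      exact ⟨⟨g, hg, 1, U₁.one_mem, mul_one g⟩, hD hg⟩
  have hrep : ∀ x : G, ∃ l ∈ L₁,
      ((L₂ : Set G) * (U₂ : Set G)) * {x} * ((L₃ : Set G) * (U₁ : Set G))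
        = (L₂ : Set G) * {l} * L₃ * U₁ := by
    intro x
    have hx : x ∈ (L₁ : Set G) * (U₁ : Set G) := hGen ▸ Set.mem_univ x
    obtain ⟨l, hl, u, hu, rfl⟩ := hx
    exact ⟨l, hl, (key _).trans (habs l u hu)⟩
  refine ⟨⟨fun d => ⟨d.1 * U₁, ?_⟩, fun c => ⟨c.1 ∩ L₁, ?_⟩, ?_, ?_⟩, ?_⟩
  · obtain ⟨_, l, hl, rfl⟩ := d
    exact ⟨l, (key l).symm⟩
  · obtain ⟨_, x, rfl⟩ := c
    obtain ⟨l, hl, h⟩ := hrep x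
    refine ⟨l, hl, ?_⟩
    dsimp only
    rw [h, hinter _ (hsub l hl)]
  · rintro ⟨_, l, hl, rfl⟩
    exact Subtype.ext (hinter _ (hsub l hl))
  · rintro ⟨_, x, rfl⟩
    obtain ⟨l, hl, h⟩ := hrep x
    apply Subtype.ext
    dsimp only
    rw [h, hinter _ (hsub l hl)]
  · intro l hl
    exact (key l).symm
end

section
/- Let G be a group that is the internal semidirect product of a subgroup L₁ and a normal subgroup U₁ (so U₁ is normal in G, L₁ ∩ U₁ = {1}, and L₁U₁ = G). Let L₂, L₃ be subgroups of L₁ and U₂, U₃ subgroups of U₁ such that L₂ normalizes U₂ and L₃ normalizes U₃ (so L₂U₂ and L₃U₃ are subgroups of G). Then the map sending the double coset U₂ u U₃ to the double coset (L₂U₂) u (L₃U₃), for u ∈ U₁, descends to the quotient of U₂\U₁/U₃ by the conjugation action of L₂ ∩ L₃ (given by l · (U₂ u U₃) = U₂ (l u l⁻¹) U₃) and induces a bijection from (U₂\U₁/U₃)/(L₂ ∩ L₃) onto the set of (L₂U₂, L₃U₃)-double cosets contained in L₂U₁L₃. -/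
open Pointwise

/-- Let `G` be the internal semidirect product of a subgroup `L₁` and a
normal subgroup `U₁`.  Let `L₂, L₃ ≤ L₁` and `U₂, U₃ ≤ U₁` be subgroups with `L₂`
normalizing `U₂` and `L₃` normalizing `U₃`.  Then the map sending the double coset
`U₂ u U₃` to `(L₂U₂) u (L₃U₃)` (for `u ∈ U₁`) descends to the quotient of `U₂\U₁/U₃`
by the conjugation action of `L₂ ∩ L₃` and induces a bijection from
`(U₂\U₁/U₃)/(L₂ ∩ L₃)` onto the set of `(L₂U₂, L₃U₃)`-double cosets contained in
`L₂U₁L₃`. -/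
theorem double_coset_quotient_by_conjugation_equiv {G : Type*} [Group G]
    (L₁ U₁ L₂ L₃ U₂ U₃ : Subgroup G)
    (hN : U₁.Normal) (hInt : L₁ ⊓ U₁ = ⊥)
    (hGen : (↑L₁ : Set G) * (↑U₁ : Set G) = Set.univ)
    (h₂ : L₂ ≤ L₁) (h₃ : L₃ ≤ L₁) (hU₂ : U₂ ≤ U₁) (hU₃ : U₃ ≤ U₁)
    (hN₂ : ∀ l ∈ L₂, ∀ u ∈ U₂, l * u * l⁻¹ ∈ U₂)
    (hN₃ : ∀ l ∈ L₃, ∀ u ∈ U₃, l * u * l⁻¹ ∈ U₃) :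
    ∃ e : Quot (fun d d' : {d : Set G | ∃ u ∈ U₁, d = (↑U₂ : Set G) * {u} * ↑U₃} =>
            ∃ l ∈ L₂ ⊓ L₃, (d' : Set G) = (fun x => l * x * l⁻¹) '' (d : Set G)) ≃
          {d : Set G | ∃ x ∈ ((↑L₂ : Set G) * (↑U₁ : Set G) * (↑L₃ : Set G)),
            d = ((↑L₂ : Set G) * (↑U₂ : Set G)) * {x} * ((↑L₃ : Set G) * (↑U₃ : Set G))},
      ∀ u (hu : u ∈ U₁),
        (e (Quot.mk _ ⟨(↑U₂ : Set G) * {u} * ↑U₃, ⟨u, hu, rfl⟩⟩) : Set G)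
          = ((↑L₂ : Set G) * (↑U₂ : Set G)) * {u} * ((↑L₃ : Set G) * (↑U₃ : Set G)) := by
  have hinv₂ : ∀ l ∈ L₂, ∀ u ∈ U₂, l⁻¹ * u * l ∈ U₂ := fun l hl u hu => by
    simpa using hN₂ l⁻¹ (inv_mem hl) u hu
  have hinv₃ : ∀ l ∈ L₃, ∀ u ∈ U₃, l⁻¹ * u * l ∈ U₃ := fun l hl u hu => by
    simpa using hN₃ l⁻¹ (inv_mem hl) u hu
  have hcomm₂ : (L₂ : Set G) * (U₂ : Set G) = U₂ * L₂ := by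
    ext x
    simp only [Set.mem_mul, SetLike.mem_coe]
    constructor
    · rintro ⟨l, hl, u, hu, rfl⟩
      exact ⟨l * u * l⁻¹, hN₂ l hl u hu, l, hl, by group⟩
    · rintro ⟨u, hu, l, hl, rfl⟩
      exact ⟨l, hl, l⁻¹ * u * l, hinv₂ l hl u hu, by group⟩
  have hcomm₃ : (L₃ : Set G) * (U₃ : Set G) = U₃ * L₃ := by
    ext x
    simp only [Set.mem_mul, SetLike.mem_coe]
    constructor
    · rintro ⟨l, hl, u, hu, rfl⟩
      exact ⟨l * u * l⁻¹, hN₃ l hl u hu, l, hl, by group⟩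
    · rintro ⟨u, hu, l, hl, rfl⟩
      exact ⟨l, hl, l⁻¹ * u * l, hinv₃ l hl u hu, by group⟩
  have hR : ∀ (H : Subgroup G) (l : G), l ∈ H → (H : Set G) * {l} = H := by
    intro H l hl
    ext x
    simp only [Set.mul_singleton, Set.mem_image, SetLike.mem_coe]
    constructor
    · rintro ⟨y, hy, rfl⟩; exact mul_mem hy hl
    · intro hx; exact ⟨x * l⁻¹, mul_mem hx (inv_mem hl), by group⟩
  have hL : ∀ (H : Subgroup G) (l : G), l ∈ H → ({l} : Set G) * H = H := by
    intro H l hl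
    ext x
    simp only [Set.singleton_mul, Set.mem_image, SetLike.mem_coe]
    constructor
    · rintro ⟨y, hy, rfl⟩; exact mul_mem hl hy
    · intro hx; exact ⟨l⁻¹ * x, mul_mem (inv_mem hl) hx, by group⟩
  have hF : ∀ u : G, (L₂ : Set G) * ((U₂ : Set G) * {u} * U₃) * L₃
      = ((↑L₂ : Set G) * (↑U₂ : Set G)) * {u} * ((↑L₃ : Set G) * (↑U₃ : Set G)) := by
    intro u
    rw [hcomm₃]
    simp only [mul_assoc]
  have hconj : ∀ (l : G) (d : Set G), (fun x => l * x * l⁻¹) '' d = {l} * d * {l⁻¹} := by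
    intro l d
    rw [Set.singleton_mul, Set.mul_singleton, Set.image_image]
  let f : Quot (fun d d' : {d : Set G | ∃ u ∈ U₁, d = (↑U₂ : Set G) * {u} * ↑U₃} =>
            ∃ l ∈ L₂ ⊓ L₃, (d' : Set G) = (fun x => l * x * l⁻¹) '' (d : Set G)) →
          {d : Set G | ∃ x ∈ ((↑L₂ : Set G) * (↑U₁ : Set G) * (↑L₃ : Set G)),
            d = ((↑L₂ : Set G) * (↑U₂ : Set G)) * {x} * ((↑L₃ : Set G) * (↑U₃ : Set G))} :=
    Quot.lift (fun d => ⟨(L₂ : Set G) * (d : Set G) * L₃, by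
      obtain ⟨d, u, hu, rfl⟩ := d
      exact ⟨u, ⟨u, ⟨1, one_mem _, u, hu, one_mul u⟩, 1, one_mem _, mul_one u⟩, hF u⟩⟩) (by
      rintro d d' ⟨l, hl, h⟩
      apply Subtype.ext
      change (L₂ : Set G) * (d : Set G) * L₃ = (L₂ : Set G) * (d' : Set G) * L₃
      rw [h, hconj]
      calc (L₂ : Set G) * (d : Set G) * L₃
          = ((L₂ : Set G) * {l}) * (d : Set G) * ({l⁻¹} * L₃) := by
            rw [hR L₂ l hl.1, hL L₃ l⁻¹ (inv_mem hl.2)]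
        _ = _ := by simp only [mul_assoc])
  have hbij : Function.Bijective f := by
    constructor
    · rintro ⟨d, u, hu, rfl⟩ ⟨d', u', hu', rfl⟩ h
      have h' : (L₂ : Set G) * ((U₂ : Set G) * {u} * U₃) * L₃
        = (L₂ : Set G) * ((U₂ : Set G) * {u'} * U₃) * L₃ := congrArg Subtype.val h
      have hm : u' ∈ (L₂ : Set G) * ((U₂ : Set G) * {u} * U₃) * L₃ := by
        rw [h']
        exact ⟨u', ⟨1, one_mem _, u', ⟨u', ⟨1, one_mem _, u', rfl, one_mul _⟩, 1, one_mem _,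
          mul_one _⟩, one_mul _⟩, 1, one_mem _, mul_one _⟩
      obtain ⟨_, ⟨l, hl, _, ⟨_, ⟨a, ha, u, rfl, rfl⟩, b, hb, rfl⟩, rfl⟩, m, hm, he⟩ := hm
      simp only [SetLike.mem_coe] at hl ha hb hm
      dsimp only at he
      have hw : a * u * b ∈ U₁ := mul_mem (mul_mem (hU₂ ha) hu) (hU₃ hb)
      have hlm : l * m ∈ L₁ ⊓ U₁ := by
        refine ⟨mul_mem (h₂ hl) (h₃ hm), ?_⟩
        have h1 := mul_mem (inv_mem (hN.conj_mem _ hw l)) hu'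
        rw [← he] at h1
        have h2 : (l * (a * u * b) * l⁻¹)⁻¹ * (l * (a * u * b) * m) = l * m := by group
        rw [h2] at h1
        exact h1
      rw [hInt, Subgroup.mem_bot] at hlm
      obtain rfl : m = l⁻¹ := eq_inv_of_mul_eq_one_right hlm
      have hl3 : l ∈ L₃ := by simpa using hm
      apply Quot.sound
      refine ⟨l, ⟨hl, hl3⟩, ?_⟩
      change (U₂ : Set G) * {u'} * U₃ = (fun x => l * x * l⁻¹) '' ((U₂ : Set G) * {u} * U₃)
      subst he
      ext x
      constructor
      · rintro ⟨_, ⟨c, hc, _, rfl, rfl⟩, d, hd, rfl⟩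
        refine ⟨(l⁻¹ * c * l * a) * u * (b * (l⁻¹ * d * l)), ⟨_, ⟨_, mul_mem (hinv₂ l hl c hc) ha,
          _, rfl, rfl⟩, _, mul_mem hb (hinv₃ l hl3 d hd), rfl⟩, ?_⟩
        dsimp only
        group
      · rintro ⟨_, ⟨_, ⟨c, hc, _, rfl, rfl⟩, d, hd, rfl⟩, rfl⟩
        refine ⟨_, ⟨_, hN₂ l hl _ (mul_mem hc (inv_mem ha)), _, rfl, rfl⟩, _,
          hN₃ l hl3 _ (mul_mem (inv_mem hb) hd), ?_⟩
        dsimp only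
        group
    · rintro ⟨d, x, ⟨_, ⟨l, hl, u, hu, rfl⟩, m, hm, rfl⟩, rfl⟩
      refine ⟨Quot.mk _ ⟨(↑U₂ : Set G) * {u} * ↑U₃, ⟨u, hu, rfl⟩⟩, ?_⟩
      apply Subtype.ext
      change (L₂ : Set G) * ((U₂ : Set G) * {u} * U₃) * L₃ =
        ((↑L₂ : Set G) * (↑U₂ : Set G)) * {l * u * m} * ((↑L₃ : Set G) * (↑U₃ : Set G))
      rw [hF, hcomm₂, ← Set.singleton_mul_singleton, ← Set.singleton_mul_singleton]
      calc (U₂ : Set G) * L₂ * {u} * ((L₃ : Set G) * U₃)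
          = (U₂ : Set G) * (L₂ * {l}) * {u} * (({m} * (L₃ : Set G)) * U₃) := by
            rw [hR L₂ l hl, hL L₃ m hm]
        _ = _ := by simp only [mul_assoc]
  exact ⟨Equiv.ofBijective f hbij, fun u hu => hF u⟩
end

section
/- Let G be a group that is the internal semidirect product of a subgroup L₁ and a normal subgroup U₁ (so U₁ is normal in G, L₁ ∩ U₁ = {1}, and L₁U₁ = G). Let L₂, L₃ be subgroups of L₁ and U₂, U₃ subgroups of U₁ such that L₂ normalizes U₂ and L₃ normalizes U₃. If u, u' ∈ U₁ satisfy u' ∈ (L₂U₂) u (L₃U₃), then there exists l ∈ L₂ ∩ L₃ such that u' ∈ U₂ (l u l⁻¹) U₃. -/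
open Pointwise

/-- Let `G` be the internal semidirect product of a subgroup `L₁` and a
normal subgroup `U₁`.  Let `L₂, L₃ ≤ L₁` and `U₂, U₃ ≤ U₁` be subgroups with `L₂`
normalizing `U₂` and `L₃` normalizing `U₃`.  If `u, u' ∈ U₁` satisfy
`u' ∈ (L₂U₂) u (L₃U₃)`, then there is `l ∈ L₂ ∩ L₃` with `u' ∈ U₂ (l u l⁻¹) U₃`. -/
theorem mem_conjugated_double_coset {G : Type*} [Group G]
    (L₁ U₁ L₂ L₃ U₂ U₃ : Subgroup G)
    (hN : U₁.Normal) (hInt : L₁ ⊓ U₁ = ⊥)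
    (hGen : (↑L₁ : Set G) * (↑U₁ : Set G) = Set.univ)
    (h₂ : L₂ ≤ L₁) (h₃ : L₃ ≤ L₁) (hU₂ : U₂ ≤ U₁) (hU₃ : U₃ ≤ U₁)
    (hN₂ : ∀ l ∈ L₂, ∀ u ∈ U₂, l * u * l⁻¹ ∈ U₂)
    (hN₃ : ∀ l ∈ L₃, ∀ u ∈ U₃, l * u * l⁻¹ ∈ U₃)
    (u u' : G) (hu : u ∈ U₁) (hu' : u' ∈ U₁)
    (h : u' ∈ ((↑L₂ : Set G) * (↑U₂ : Set G)) * {u} * ((↑L₃ : Set G) * (↑U₃ : Set G))) :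
    ∃ l ∈ L₂ ⊓ L₃, u' ∈ (↑U₂ : Set G) * {l * u * l⁻¹} * ↑U₃ := by
  rw [Set.mem_mul] at h
  obtain ⟨p, hp, q, hq, hpq⟩ := h
  obtain ⟨r, hr, v, hv, rfl⟩ := Set.mem_mul.1 hp
  obtain ⟨a, ha, x, hx, rfl⟩ := Set.mem_mul.1 hr
  obtain ⟨b, hb, y, hy, rfl⟩ := Set.mem_mul.1 hq
  rw [Set.mem_singleton_iff] at hv
  subst hv
  rw [SetLike.mem_coe] at ha hx hb hy
  have hc : a * (x * v) * a⁻¹ ∈ U₁ := hN.conj_mem _ (U₁.mul_mem (hU₂ hx) hu) a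
  have hab : a * b ∈ U₁ := by
    have e : a * b = (a * (x * v) * a⁻¹)⁻¹ * u' * y⁻¹ := by
      rw [← hpq]; group
    rw [e]
    exact U₁.mul_mem (U₁.mul_mem (U₁.inv_mem hc) hu') (U₁.inv_mem (hU₃ hy))
  have h1 : a * b = 1 := by
    have : a * b ∈ L₁ ⊓ U₁ := ⟨L₁.mul_mem (h₂ ha) (h₃ hb), hab⟩
    rwa [hInt, Subgroup.mem_bot] at this
  have hb' : b = a⁻¹ := eq_inv_of_mul_eq_one_right h1
  subst hb'
  refine ⟨a, ⟨ha, by simpa using hb⟩, ?_⟩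
  refine Set.mem_mul.2 ⟨(a * x * a⁻¹) * (a * v * a⁻¹),
    Set.mul_mem_mul (hN₂ a ha x hx) rfl, y, hy, ?_⟩
  rw [← hpq]; group
end

section
/- Let G be a group, P and P' subgroups of G, U' and Q subgroups of P', and g ∈ G. Then the map sending the double coset (g⁻¹Pg ∩ P') a Q to the double coset P(ga)Q, for a ∈ U'Q, is a well-defined bijection from the set of (g⁻¹Pg ∩ P', Q)-double cosets contained in (g⁻¹Pg ∩ P') U' Q onto the set of (P, Q)-double cosets contained in P g U' Q. -/
open Pointwise

/-- Let `G` be a group, `P, P'` subgroups, `U', Q` subgroups of `P'`,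
and `g ∈ G`.  Writing `g⁻¹Pg = {x | g x g⁻¹ ∈ P}` and `R = g⁻¹Pg ∩ P'`, the map sending
the double coset `R a Q` to `P (ga) Q` (for `a ∈ U'Q`) is a well-defined bijection from
the set of `(R, Q)`-double cosets contained in `R U' Q` onto the set of `(P, Q)`-double
cosets contained in `P g U' Q`. -/
theorem double_cosets_in_PgUQ_equiv {G : Type*} [Group G]
    (P P' U' Q : Subgroup G) (hU' : U' ≤ P') (hQ : Q ≤ P') (g : G) :
    ∃ e : {d : Set G | ∃ a ∈ (({x : G | g * x * g⁻¹ ∈ P} ∩ ↑P') * (↑U' : Set G) * (↑Q : Set G)),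
            d = ({x : G | g * x * g⁻¹ ∈ P} ∩ ↑P') * {a} * ↑Q} ≃
          {d : Set G | ∃ x ∈ ((↑P : Set G) * {g} * (↑U' : Set G) * (↑Q : Set G)),
            d = (↑P : Set G) * {x} * ↑Q},
      ∀ a (ha : a ∈ ((↑U' : Set G) * (↑Q : Set G)))
        (ha' : a ∈ (({x : G | g * x * g⁻¹ ∈ P} ∩ ↑P') * (↑U' : Set G) * (↑Q : Set G))),
        (e ⟨({x : G | g * x * g⁻¹ ∈ P} ∩ ↑P') * {a} * ↑Q, ⟨a, ha', rfl⟩⟩ : Set G)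
          = (↑P : Set G) * {g * a} * ↑Q := by
    classical
  have key : ∀ a : G, (↑P : Set G) * {g} * (({x : G | g * x * g⁻¹ ∈ P} ∩ ↑P') * {a} * ↑Q)
      = (↑P : Set G) * {g * a} * ↑Q := by
    intro a
    ext y
    change _ ↔ y ∈ DoubleCoset.doubleCoset (g * a) (P : Set G) Q
    rw [DoubleCoset.mem_doubleCoset]
    constructor
    · rintro ⟨_, ⟨p, hp, g', hg, rfl⟩, _, ⟨_, ⟨r, ⟨hr, -⟩, a', ha, rfl⟩, q, hq, rfl⟩, rfl⟩
      rw [Set.mem_singleton_iff] at hg ha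
      refine ⟨p * (g * r * g⁻¹), P.mul_mem hp hr, q, hq, ?_⟩
      simp only [hg, ha]
      group
    · rintro ⟨p, hp, q, hq, rfl⟩
      refine ⟨_, ⟨p, hp, g, rfl, rfl⟩, _, ⟨_, ⟨1, ⟨?_, P'.one_mem⟩, a, rfl, rfl⟩, q, hq, rfl⟩, ?_⟩
      · simp [P.one_mem]
      · simp only
        group
  have hP' : ∀ a ∈ (({x : G | g * x * g⁻¹ ∈ P} ∩ ↑P') * (↑U' : Set G) * (↑Q : Set G)), a ∈ P' := by
    rintro _ ⟨_, ⟨r, ⟨-, hr⟩, u, hu, rfl⟩, q, hq, rfl⟩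
    exact P'.mul_mem (P'.mul_mem hr (hU' hu)) (hQ hq)
  have hmem : ∀ a ∈ (({x : G | g * x * g⁻¹ ∈ P} ∩ ↑P') * (↑U' : Set G) * (↑Q : Set G)),
      g * a ∈ ((↑P : Set G) * {g} * (↑U' : Set G) * (↑Q : Set G)) := by
    rintro _ ⟨_, ⟨r, ⟨hr, -⟩, u, hu, rfl⟩, q, hq, rfl⟩
    refine ⟨_, ⟨_, ⟨g * r * g⁻¹, hr, g, rfl, rfl⟩, u, hu, rfl⟩, q, hq, ?_⟩
    simp only
    group
  refine ⟨Equiv.ofBijective (fun d => ⟨(↑P : Set G) * {g} * d.1, ?_⟩) ⟨?_, ?_⟩, ?_⟩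
  · obtain ⟨_, a, ha, rfl⟩ := d
    exact ⟨g * a, hmem a ha, key a⟩
  · rintro ⟨_, a, ha, rfl⟩ ⟨_, b, hb, rfl⟩ h
    have h1 := congrArg Subtype.val h
    simp only [key] at h1
    have h2 : g * b ∈ (↑P : Set G) * {g * a} * ↑Q := by
      rw [h1]
      exact DoubleCoset.mem_doubleCoset_self P Q (g * b)
    obtain ⟨p, hp, q, hq, h3⟩ := DoubleCoset.mem_doubleCoset.1 h2
    have h4 : b = g⁻¹ * p * g * a * q := by
      rw [← mul_right_inj g, h3]
      group
    have h5 : g⁻¹ * p * g = b * q⁻¹ * a⁻¹ := by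
      rw [h4]
      group
    apply Subtype.ext
    symm
    refine DoubleCoset.doubleCoset_eq_of_mem
      (H := (P.comap (MulAut.conj g).toMonoidHom) ⊓ P') (K := Q) (a := a) (b := b) ?_
    refine DoubleCoset.mem_doubleCoset.2 ⟨g⁻¹ * p * g, ⟨?_, ?_⟩, q, hq, h4⟩
    · change g * (g⁻¹ * p * g) * g⁻¹ ∈ P
      have : g * (g⁻¹ * p * g) * g⁻¹ = p := by group
      rwa [this]
    · rw [h5]
      exact P'.mul_mem (P'.mul_mem (hP' b hb) (P'.inv_mem (hQ hq))) (P'.inv_mem (hP' a ha))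
  · rintro ⟨_, _, ⟨_, ⟨_, ⟨p, hp, _, rfl, rfl⟩, u, hu, rfl⟩, q, hq, rfl⟩, rfl⟩
    refine ⟨⟨_, u, ⟨_, ⟨1, ⟨?_, P'.one_mem⟩, u, hu, rfl⟩, 1, Q.one_mem, ?_⟩, rfl⟩, ?_⟩
    · simp [P.one_mem]
    · simp
    · apply Subtype.ext
      refine (key u).trans ?_
      symm
      refine DoubleCoset.doubleCoset_eq_of_mem (H := P) (K := Q) ?_
      refine DoubleCoset.mem_doubleCoset.2 ⟨p, hp, q, hq, ?_⟩
      simp only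
      group
  · intro a ha ha'
    exact key a
end

section
/- Let G be a group that is the internal semidirect product of a subgroup L and a normal subgroup U (so U is normal in G, L ∩ U = {1}, and LU = G). Let R be a subgroup of G satisfying R = (R ∩ L)(R ∩ U), and let L₃ be a subgroup of L. Then the map sending the double coset (R ∩ L) l L₃ to the double coset R l (L₃U), for l ∈ L, is a well-defined bijection from (R ∩ L)\L/L₃ onto R\G/(L₃U). -/
open Pointwise

/-- Let `G` be the internal semidirect product of a subgroup `L` and
a normal subgroup `U`.  Let `R ≤ G` satisfy `R = (R ∩ L)(R ∩ U)` and let `L₃` be a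
subgroup of `L`.  Then the map sending the double coset `(R ∩ L) l L₃` to `R l (L₃U)`
(for `l ∈ L`) is a well-defined bijection from `(R ∩ L)\L/L₃` onto `R\G/(L₃U)`. -/
theorem double_coset_levi_equiv {G : Type*} [Group G]
    (L U R L₃ : Subgroup G)
    (hN : U.Normal) (hInt : L ⊓ U = ⊥)
    (hGen : (↑L : Set G) * (↑U : Set G) = Set.univ)
    (hR : (↑R : Set G) = (↑(R ⊓ L) : Set G) * (↑(R ⊓ U) : Set G))
    (h₃ : L₃ ≤ L) :
    ∃ e : {d : Set G | ∃ l ∈ L, d = (↑(R ⊓ L) : Set G) * {l} * ↑L₃} ≃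
          {d : Set G | ∃ x : G, d = (↑R : Set G) * {x} * ((↑L₃ : Set G) * (↑U : Set G))},
      ∀ l (hl : l ∈ L),
        (e ⟨(↑(R ⊓ L) : Set G) * {l} * ↑L₃, ⟨l, hl, rfl⟩⟩ : Set G)
          = (↑R : Set G) * {l} * ((↑L₃ : Set G) * (↑U : Set G)) := by
  have key : ∀ l v : G, v ∈ U →
      (↑R : Set G) * {l * v} * ((↑L₃ : Set G) * (↑U : Set G))
        = ((↑(R ⊓ L) : Set G) * {l} * ↑L₃) * (↑U : Set G) := by
    intro l v hv
    ext g
    constructor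
    · rintro ⟨_, ⟨r, hr, _, rfl, rfl⟩, _, ⟨c, hc, u, hu, rfl⟩, rfl⟩
      rw [hR] at hr
      obtain ⟨a, ha, b, hb, rfl⟩ := hr
      refine ⟨a * l * c, ⟨a * l, ⟨a, ha, l, rfl, rfl⟩, c, hc, rfl⟩,
        ((l * c)⁻¹ * b * (l * c)) * (c⁻¹ * v * c) * u, ?_, ?_⟩
      · refine U.mul_mem (U.mul_mem ?_ ?_) hu
        · simpa using hN.conj_mem b hb.2 (l * c)⁻¹
        · simpa using hN.conj_mem v hv c⁻¹
      · dsimp only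
        group
    · rintro ⟨_, ⟨_, ⟨a, ha, _, rfl, rfl⟩, c, hc, rfl⟩, u, hu, rfl⟩
      refine ⟨a * (_ * v), ⟨a, ha.1, _, rfl, rfl⟩, c * ((c⁻¹ * v⁻¹ * c) * u),
        ⟨c, hc, (c⁻¹ * v⁻¹ * c) * u, ?_, rfl⟩, ?_⟩
      · refine U.mul_mem ?_ hu
        simpa using hN.conj_mem v⁻¹ (U.inv_mem hv) c⁻¹
      · dsimp only
        group
  have key1 : ∀ l : G, (↑R : Set G) * {l} * ((↑L₃ : Set G) * (↑U : Set G))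
        = ((↑(R ⊓ L) : Set G) * {l} * ↑L₃) * (↑U : Set G) := by
    intro l
    simpa using key l 1 U.one_mem
  have dec : ∀ x : G, ∃ l ∈ L, ∃ v ∈ U, l * v = x := by
    intro x
    have hx : x ∈ (↑L : Set G) * (↑U : Set G) := hGen ▸ Set.mem_univ x
    obtain ⟨l, hl, v, hv, h⟩ := hx
    exact ⟨l, hl, v, hv, h⟩
  have inter : ∀ l ∈ L, (((↑(R ⊓ L) : Set G) * {l} * ↑L₃) * (↑U : Set G)) ∩ ↑L
      = (↑(R ⊓ L) : Set G) * {l} * ↑L₃ := by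
    intro l hl
    have sub : ∀ g ∈ (↑(R ⊓ L) : Set G) * {l} * (↑L₃ : Set G), g ∈ L := by
      rintro _ ⟨_, ⟨a, ha, _, rfl, rfl⟩, c, hc, rfl⟩
      exact L.mul_mem (L.mul_mem ha.2 hl) (h₃ hc)
    ext g
    constructor
    · rintro ⟨⟨m, hm, u, hu, rfl⟩, hg⟩
      have huL : u ∈ L := (L.mul_mem_cancel_left (sub m hm)).1 hg
      have h1 : u ∈ L ⊓ U := ⟨huL, hu⟩
      rw [hInt, Subgroup.mem_bot] at h1
      subst h1
      simpa using hm
    · intro hg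
      exact ⟨⟨g, hg, 1, U.one_mem, mul_one g⟩, sub g hg⟩
  refine ⟨⟨fun d => ⟨d.1 * (↑U : Set G), ?_⟩, fun D => ⟨D.1 ∩ ↑L, ?_⟩, ?_, ?_⟩, ?_⟩
  · obtain ⟨_, l, hl, rfl⟩ := d
    exact ⟨l, (key1 l).symm⟩
  · obtain ⟨_, x, rfl⟩ := D
    obtain ⟨l, hl, v, hv, rfl⟩ := dec x
    exact ⟨l, hl, by dsimp only; rw [key l v hv, inter l hl]⟩
  · rintro ⟨_, l, hl, rfl⟩
    exact Subtype.ext (inter l hl)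
  · rintro ⟨_, x, rfl⟩
    obtain ⟨l, hl, v, hv, rfl⟩ := dec x
    apply Subtype.ext
    dsimp only
    rw [key l v hv, inter l hl]
  · intro l hl
    exact (key1 l).symm
end

section
/- Let P' be a group that is the internal semidirect product of a subgroup L' and a normal subgroup U' (so U' is normal in P', L' ∩ U' = {1}, and L'U' = P'). Let L'_K be a subgroup of L' and U'_K a subgroup of U' such that L'_K normalizes U'_K, and set Q = L'_K U'_K (a subgroup of P'). Let R be a subgroup of P' satisfying R = (R ∩ L')(R ∩ U'). Then the map sending the double coset R a Q to the double coset (R ∩ L') b L'_K, where a = b u is the unique decomposition with b ∈ L' and u ∈ U', is a well-defined map from R\P'/Q to (R ∩ L')\L'/L'_K; that is, if a, a' ∈ P' satisfy R a Q = R a' Q and have decompositions a = b u, a' = b' u' with b, b' ∈ L' and u, u' ∈ U', then (R ∩ L') b L'_K = (R ∩ L') b' L'_K. -/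
open Pointwise

/-- Let `P'` be the internal semidirect product of a subgroup `L'` and
a normal subgroup `U'`.  Let `L'_K ≤ L'` and `U'_K ≤ U'` be subgroups such that `L'_K`
normalizes `U'_K`, and set `Q = L'_K U'_K`.  Let `R ≤ P'` satisfy
`R = (R ∩ L')(R ∩ U')`.  Then the map sending the double coset `R a Q` to
`(R ∩ L') b L'_K`, where `a = b u` with `b ∈ L'` and `u ∈ U'`, is well defined:
if `R a Q = R a' Q` and `a = b u`, `a' = b' u'` with `b, b' ∈ L'`, `u, u' ∈ U'`, then
`(R ∩ L') b L'_K = (R ∩ L') b' L'_K`. -/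
theorem levi_projection_well_defined {P' : Type*} [Group P']
    (L' U' L'K U'K R : Subgroup P')
    (hN : U'.Normal) (hInt : L' ⊓ U' = ⊥)
    (hGen : (↑L' : Set P') * (↑U' : Set P') = Set.univ)
    (hLK : L'K ≤ L') (hUK : U'K ≤ U')
    (hNorm : ∀ l ∈ L'K, ∀ u ∈ U'K, l * u * l⁻¹ ∈ U'K)
    (hR : (↑R : Set P') = (↑(R ⊓ L') : Set P') * (↑(R ⊓ U') : Set P'))
    (a a' b b' u u' : P')
    (hb : b ∈ L') (hb' : b' ∈ L') (hu : u ∈ U') (hu' : u' ∈ U')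
    (ha : a = b * u) (ha' : a' = b' * u')
    (h : (↑R : Set P') * {a} * ((↑L'K : Set P') * (↑U'K : Set P'))
         = (↑R : Set P') * {a'} * ((↑L'K : Set P') * (↑U'K : Set P'))) :
    (↑(R ⊓ L') : Set P') * {b} * ↑L'K = (↑(R ⊓ L') : Set P') * {b'} * ↑L'K := by
  have hmem : a ∈ (↑R : Set P') * {a'} * ((↑L'K : Set P') * (↑U'K : Set P')) := by
    rw [← h]
    exact Set.mem_mul.2 ⟨a, Set.mem_mul.2 ⟨1, R.one_mem, a, rfl, one_mul a⟩, 1,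
      Set.mem_mul.2 ⟨1, L'K.one_mem, 1, U'K.one_mem, one_mul 1⟩, mul_one a⟩
  obtain ⟨x, ⟨r, hr, y, hy, rfl⟩, q, ⟨l, hl, w, hw, rfl⟩, hx⟩ := hmem
  rw [hR] at hr
  obtain ⟨s, hs, v, hv, rfl⟩ := hr
  rw [Set.mem_singleton_iff] at hy
  subst hy
  subst ha
  subst ha'
  simp only [SetLike.mem_coe] at hs hv hl hw
  have hq : (QuotientGroup.mk' U') (s * b' * l) = (QuotientGroup.mk' U') b := by
    have e := congrArg (QuotientGroup.mk' U') hx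
    have k : ∀ z ∈ U', (QuotientGroup.mk' U') z = 1 := fun z hz =>
      (QuotientGroup.eq_one_iff z).2 hz
    simpa only [map_mul, k _ hu, k _ hu', k _ hv.2, k _ (hUK hw), mul_one] using e
  have hU : (s * b' * l)⁻¹ * b ∈ U' := QuotientGroup.eq.1 hq
  have hL : (s * b' * l)⁻¹ * b ∈ L' :=
    L'.mul_mem (L'.inv_mem (L'.mul_mem (L'.mul_mem hs.2 hb') (hLK hl))) hb
  have h1 : (s * b' * l)⁻¹ * b ∈ L' ⊓ U' := ⟨hL, hU⟩
  rw [hInt, Subgroup.mem_bot, inv_mul_eq_one] at h1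
  have hd : b ∈ DoubleCoset.doubleCoset b' (↑(R ⊓ L') : Set P') (↑L'K : Set P') :=
    DoubleCoset.mem_doubleCoset.2 ⟨s, hs, l, hl, h1.symm⟩
  exact DoubleCoset.doubleCoset_eq_of_mem hd
end

section
/- Let G be a group, K and P subgroups of G, and P' a subgroup of G that is the internal semidirect product of a subgroup L' and a normal subgroup U' of P'. Set L'_K = L' ∩ K, U'_K = U' ∩ K, and Q = P' ∩ K. Assume: (i) Q = L'_K U'_K, i.e. every element of Q is a product of an element of L'_K and an element of U'_K; and (ii) for every g ∈ G, g⁻¹Pg ∩ P' = (g⁻¹Pg ∩ L')(g⁻¹Pg ∩ U'). Let W ⊆ G be a set of representatives for the double cosets P\G/P', and for each w ∈ W let V(w) ⊆ L' be a set of representatives for the double cosets ((w⁻¹Pw) ∩ L')\L'/L'_K. Then for each w ∈ W and v ∈ V(w), the subgroup (wv)⁻¹P(wv) ∩ L'_K acts by conjugation on the double coset space ((wv)⁻¹P(wv) ∩ U')\U'/U'_K, and there is a bijection between the set of K-orbits on (G/P) × (K/Q) under the diagonal K-action and the disjoint union, over all w ∈ W and v ∈ V(w), of the orbit sets (((wv)⁻¹P(wv)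 ∩ U')\U'/U'_K) / ((wv)⁻¹P(wv) ∩ L'_K). -/
open Pointwise

/-- The double coset space `((g⁻¹Pg) ∩ U')\U'/U'_K`, realized as the set of subsets of
`G` of the form `((g⁻¹Pg) ∩ U') u U'_K` with `u ∈ U'`.  Here `g⁻¹Pg = {x | gxg⁻¹ ∈ P}`. -/
def unipotentDoubleCosets {G : Type*} [Group G] (P U' UK : Subgroup G) (g : G) :
    Set (Set G) :=
  {d | ∃ u ∈ U', d = ({x : G | g * x * g⁻¹ ∈ P} ∩ (↑U' : Set G)) * {u} * ↑UK}

/-- The conjugation relation on `((g⁻¹Pg) ∩ U')\U'/U'_K` induced by the subgroup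
`(g⁻¹Pg) ∩ L'_K`: two double cosets are related iff one is obtained from the other by
conjugation by an element `m ∈ (g⁻¹Pg) ∩ L'_K`. -/
def conjDosetRel {G : Type*} [Group G] (P U' UK LK : Subgroup G) (g : G) :
    ↥(unipotentDoubleCosets P U' UK g) → ↥(unipotentDoubleCosets P U' UK g) → Prop :=
  fun d d' => ∃ m ∈ ({x : G | g * x * g⁻¹ ∈ P} ∩ (↑LK : Set G)),
    (d' : Set G) = (fun x => m * x * m⁻¹) '' (d : Set G)

theorem dfo_mem_doset {G : Type*} [Group G] (P U UK : Subgroup G) (g u x : G) :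
    x ∈ ({x : G | g * x * g⁻¹ ∈ P} ∩ (↑U : Set G)) * {u} * (↑UK : Set G) ↔
      ∃ n k, g * n * g⁻¹ ∈ P ∧ n ∈ U ∧ k ∈ UK ∧ x = n * u * k := by
  constructor
  · rintro ⟨_, ⟨n, ⟨hn, hn'⟩, _, rfl, rfl⟩, k, hk, rfl⟩
    exact ⟨n, k, hn, hn', hk, rfl⟩
  · rintro ⟨n, k, hn, hn', hk, rfl⟩
    exact ⟨_, ⟨n, ⟨hn, hn'⟩, _, rfl, rfl⟩, k, hk, rfl⟩

theorem dfo_mul_mem {G : Type*} [Group G] (P : Subgroup G) {g a b : G}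
    (ha : g * a * g⁻¹ ∈ P) (hb : g * b * g⁻¹ ∈ P) : g * (a * b) * g⁻¹ ∈ P := by
  have := P.mul_mem ha hb
  rwa [show g * a * g⁻¹ * (g * b * g⁻¹) = g * (a * b) * g⁻¹ by group] at this

theorem dfo_inv_mem {G : Type*} [Group G] (P : Subgroup G) {g a : G}
    (ha : g * a * g⁻¹ ∈ P) : g * a⁻¹ * g⁻¹ ∈ P := by
  have := P.inv_mem ha
  rwa [show (g * a * g⁻¹)⁻¹ = g * a⁻¹ * g⁻¹ by group] at this

theorem dfo_doset_eq {G : Type*} [Group G] (P U UK : Subgroup G) (g u n k : G)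
    (hn : g * n * g⁻¹ ∈ P) (hn' : n ∈ U) (hk : k ∈ UK) :
    ({x : G | g * x * g⁻¹ ∈ P} ∩ (↑U : Set G)) * {n * u * k} * (↑UK : Set G) =
      ({x : G | g * x * g⁻¹ ∈ P} ∩ (↑U : Set G)) * {u} * (↑UK : Set G) := by
  ext x
  rw [dfo_mem_doset, dfo_mem_doset]
  constructor
  · rintro ⟨a, b, ha, ha', hb, rfl⟩
    exact ⟨a * n, k * b, dfo_mul_mem P ha hn, U.mul_mem ha' hn', UK.mul_mem hk hb, by group⟩
  · rintro ⟨a, b, ha, ha', hb, rfl⟩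
    exact ⟨a * n⁻¹, k⁻¹ * b, dfo_mul_mem P ha (dfo_inv_mem P hn), U.mul_mem ha' (U.inv_mem hn'),
      UK.mul_mem (UK.inv_mem hk) hb, by group⟩

theorem dfo_conj_doset {G : Type*} [Group G] (P U UK : Subgroup G) (g u m : G)
    (hm : g * m * g⁻¹ ∈ P)
    (hU : ∀ x ∈ U, m * x * m⁻¹ ∈ U) (hU2 : ∀ x ∈ U, m⁻¹ * x * m ∈ U)
    (hK : ∀ x ∈ UK, m * x * m⁻¹ ∈ UK) (hK2 : ∀ x ∈ UK, m⁻¹ * x * m ∈ UK) :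
    (fun x => m * x * m⁻¹) ''
      (({x : G | g * x * g⁻¹ ∈ P} ∩ (↑U : Set G)) * {u} * (↑UK : Set G)) =
      ({x : G | g * x * g⁻¹ ∈ P} ∩ (↑U : Set G)) * {m * u * m⁻¹} * (↑UK : Set G) := by
  ext x
  rw [dfo_mem_doset, Set.mem_image]
  constructor
  · rintro ⟨y, hy, rfl⟩
    obtain ⟨n, k, hn, hn', hk, rfl⟩ := (dfo_mem_doset P U UK g u y).1 hy
    exact ⟨m * n * m⁻¹, m * k * m⁻¹, dfo_mul_mem P (dfo_mul_mem P hm hn) (dfo_inv_mem P hm),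
      hU n hn', hK k hk, by group⟩
  · rintro ⟨n, k, hn, hn', hk, rfl⟩
    refine ⟨(m⁻¹ * n * m) * u * (m⁻¹ * k * m), (dfo_mem_doset P U UK g u _).2
      ⟨_, _, dfo_mul_mem P (dfo_mul_mem P (dfo_inv_mem P hm) hn) hm, hU2 n hn', hK2 k hk, rfl⟩, ?_⟩
    group

/-- The orbit attached to `x`. -/
def dfoOrb {G : Type*} [Group G] (K P P' : Subgroup G) (x : G) :
    Quotient (MulAction.orbitRel ↥K ((G ⧸ P) × (↥K ⧸ (P' ⊓ K).subgroupOf K))) :=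
  Quotient.mk _ (((x⁻¹ : G) : G ⧸ P), ((1 : K) : ↥K ⧸ (P' ⊓ K).subgroupOf K))

theorem dfoOrb_eq {G : Type*} [Group G] (K P P' : Subgroup G) (x y : G) :
    dfoOrb K P P' x = dfoOrb K P P' y ↔ ∃ p ∈ P, ∃ q ∈ P' ⊓ K, y = p * x * q := by
  unfold dfoOrb
  rw [Quotient.eq, MulAction.orbitRel_apply, MulAction.mem_orbit_iff]
  constructor
  · rintro ⟨k, hk⟩
    have h1 : ((k : G) * y⁻¹ : G) = ((x⁻¹ : G) : G ⧸ P) := congrArg Prod.fst hk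
    have h2 : ((k * 1 : K) : ↥K ⧸ (P' ⊓ K).subgroupOf K) = ((1 : K) : _) := congrArg Prod.snd hk
    rw [QuotientGroup.eq] at h1 h2
    rw [Subgroup.mem_subgroupOf] at h2
    have h2' : (k : G) ∈ P' ⊓ K := by simpa using h2
    refine ⟨_, h1, k, h2', ?_⟩
    group
  · rintro ⟨p, hp, q, hq, rfl⟩
    refine ⟨⟨q, hq.2⟩, Prod.ext ?_ ?_⟩
    · change ((q * (p * x * q)⁻¹ : G) : G ⧸ P) = ((x⁻¹ : G) : G ⧸ P)
      rw [QuotientGroup.eq]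
      simpa [mul_assoc] using hp
    · change (((⟨q, hq.2⟩ : K) * 1 : K) : ↥K ⧸ (P' ⊓ K).subgroupOf K) = ((1 : K) : _)
      rw [QuotientGroup.eq, Subgroup.mem_subgroupOf]
      simpa using hq

theorem dfoOrb_surj {G : Type*} [Group G] (K P P' : Subgroup G) (o) :
    ∃ x, dfoOrb K P P' x = o := by
  induction o using Quotient.inductionOn with
  | h o =>
  obtain ⟨a, b⟩ := o
  induction a using QuotientGroup.induction_on with
  | H a =>
  induction b using QuotientGroup.induction_on with
  | H b =>
  refine ⟨a⁻¹ * b, ?_⟩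
  unfold dfoOrb
  rw [Quotient.eq, MulAction.orbitRel_apply, MulAction.mem_orbit_iff]
  refine ⟨b⁻¹, Prod.ext ?_ ?_⟩
  · change (((b : G)⁻¹ * a : G) : G ⧸ P) = (((a⁻¹ * b)⁻¹ : G) : G ⧸ P)
    congr 1
    group
  · change ((b⁻¹ * b : K) : ↥K ⧸ (P' ⊓ K).subgroupOf K) = ((1 : K) : _)
    rw [inv_mul_cancel]

/-- Parametrization of the `K`-orbits on the double flag variety
`(G/P) × (K/Q)`: with `P'` an internal semidirect product `L' ⋉ U'`,
`L'_K = L' ∩ K`, `U'_K = U' ∩ K`, `Q = P' ∩ K`, assuming `Q = L'_K U'_K` and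
`g⁻¹Pg ∩ P' = (g⁻¹Pg ∩ L')(g⁻¹Pg ∩ U')` for all `g`, and given systems of
representatives `W` for `P\G/P'` and `V w` for `((w⁻¹Pw) ∩ L')\L'/L'_K`, the subgroup
`(wv)⁻¹P(wv) ∩ L'_K` acts by conjugation on `((wv)⁻¹P(wv) ∩ U')\U'/U'_K`, and the
`K`-orbit space of `(G/P) × (K/Q)` is in bijection with the disjoint union over
`w ∈ W`, `v ∈ V w` of the corresponding quotients. -/
theorem double_flag_orbit_parametrization {G : Type*} [Group G]
    (K P P' L' U' : Subgroup G)
    (hL' : L' ≤ P') (hU' : U' ≤ P')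
    (hNormal : ∀ p ∈ P', ∀ u ∈ U', p * u * p⁻¹ ∈ U')
    (hInt : L' ⊓ U' = ⊥)
    (hGen : (↑L' : Set G) * (↑U' : Set G) = (↑P' : Set G))
    (hQ : (↑(P' ⊓ K) : Set G) = (↑(L' ⊓ K) : Set G) * (↑(U' ⊓ K) : Set G))
    (hLevi : ∀ g : G,
      ({x : G | g * x * g⁻¹ ∈ P} ∩ (↑P' : Set G))
        = ({x : G | g * x * g⁻¹ ∈ P} ∩ (↑L' : Set G)) *
          ({x : G | g * x * g⁻¹ ∈ P} ∩ (↑U' : Set G)))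
    (W : Set G)
    (hW₁ : ∀ x : G, ∃ w ∈ W, x ∈ (↑P : Set G) * {w} * (↑P' : Set G))
    (hW₂ : ∀ w ∈ W, ∀ w' ∈ W, w' ∈ (↑P : Set G) * {w} * (↑P' : Set G) → w = w')
    (V : G → Set G)
    (hV₀ : ∀ w ∈ W, V w ⊆ (↑L' : Set G))
    (hV₁ : ∀ w ∈ W, ∀ l ∈ L', ∃ v ∈ V w,
      l ∈ ({x : G | w * x * w⁻¹ ∈ P} ∩ (↑L' : Set G)) * {v} * (↑(L' ⊓ K) : Set G))
    (hV₂ : ∀ w ∈ W, ∀ v ∈ V w, ∀ v' ∈ V w,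
      v' ∈ ({x : G | w * x * w⁻¹ ∈ P} ∩ (↑L' : Set G)) * {v} * (↑(L' ⊓ K) : Set G)
        → v = v') :
    (∀ w ∈ W, ∀ v ∈ V w,
      ∀ m ∈ ({x : G | (w * v) * x * (w * v)⁻¹ ∈ P} ∩ (↑(L' ⊓ K) : Set G)),
      ∀ u ∈ U',
        m * u * m⁻¹ ∈ U' ∧
        (fun x => m * x * m⁻¹) ''
            (({x : G | (w * v) * x * (w * v)⁻¹ ∈ P} ∩ (↑U' : Set G)) * {u} * ↑(U' ⊓ K))
          = ({x : G | (w * v) * x * (w * v)⁻¹ ∈ P} ∩ (↑U' : Set G)) * {m * u * m⁻¹} *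
              ↑(U' ⊓ K)) ∧
    Nonempty
      (Quotient (MulAction.orbitRel ↥K ((G ⧸ P) × (↥K ⧸ (P' ⊓ K).subgroupOf K))) ≃
        Σ (w : W) (v : V (w : G)),
          Quot (conjDosetRel P U' (U' ⊓ K) (L' ⊓ K) ((w : G) * (v : G)))) := by
  have hLU : ∀ a ∈ L', ∀ b ∈ L', ∀ c ∈ U', ∀ d ∈ U', a * c = b * d → a = b := by
    intro a ha b hb c hc d hd h
    have h1 : b⁻¹ * a = d * c⁻¹ := by
      rw [inv_mul_eq_iff_eq_mul, ← mul_assoc, ← h]; group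
    have h2 : b⁻¹ * a ∈ L' ⊓ U' :=
      ⟨L'.mul_mem (L'.inv_mem hb) ha, h1 ▸ U'.mul_mem hd (U'.inv_mem hc)⟩
    rw [hInt, Subgroup.mem_bot, inv_mul_eq_one] at h2
    exact h2.symm
  have hNormal2 : ∀ p ∈ P', ∀ u ∈ U', p⁻¹ * u * p ∈ U' := by
    intro p hp u hu
    simpa using hNormal p⁻¹ (P'.inv_mem hp) u hu
  have hConj : ∀ g m : G, g * m * g⁻¹ ∈ P → m ∈ L' ⊓ K → ∀ u : G,
      (fun x => m * x * m⁻¹) ''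
        (({x : G | g * x * g⁻¹ ∈ P} ∩ (↑U' : Set G)) * {u} * (↑(U' ⊓ K) : Set G)) =
      ({x : G | g * x * g⁻¹ ∈ P} ∩ (↑U' : Set G)) * {m * u * m⁻¹} * (↑(U' ⊓ K) : Set G) := by
    intro g m hm hm' u
    have hmP := hL' hm'.1
    exact dfo_conj_doset P U' (U' ⊓ K) g u m hm (hNormal m hmP) (hNormal2 m hmP)
      (fun x hx => ⟨hNormal m hmP x hx.1, K.mul_mem (K.mul_mem hm'.2 hx.2) (K.inv_mem hm'.2)⟩)
      (fun x hx => ⟨hNormal2 m hmP x hx.1, K.mul_mem (K.mul_mem (K.inv_mem hm'.2) hx.2) hm'.2⟩)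
  have hQ' : ∀ q ∈ P' ⊓ K, ∃ l ∈ L' ⊓ K, ∃ u ∈ U' ⊓ K, l * u = q := by
    intro q hq
    have : q ∈ (↑(P' ⊓ K) : Set G) := hq
    rw [hQ] at this
    exact this
  have hQL : ∀ l ∈ L' ⊓ K, l ∈ P' ⊓ K := fun l hl => ⟨hL' hl.1, hl.2⟩
  have hQU : ∀ l ∈ U' ⊓ K, l ∈ P' ⊓ K := fun l hl => ⟨hU' hl.1, hl.2⟩
  have hLevi' : ∀ g h : G, g * h * g⁻¹ ∈ P → h ∈ P' → ∃ a ∈ L', ∃ c ∈ U',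
      g * a * g⁻¹ ∈ P ∧ g * c * g⁻¹ ∈ P ∧ a * c = h := by
    intro g h h1 h2
    have : h ∈ ({x : G | g * x * g⁻¹ ∈ P} ∩ (↑P' : Set G)) := ⟨h1, h2⟩
    rw [hLevi] at this
    obtain ⟨a, ⟨ha, ha'⟩, c, ⟨hc, hc'⟩, rfl⟩ := this
    exact ⟨a, ha', c, hc', ha, hc, rfl⟩
  -- the key computation
  have hKey : ∀ g l l' u u' p q : G, l ∈ L' → l' ∈ L' → u ∈ U' → u' ∈ U' → p ∈ P → q ∈ P' ⊓ K →
      g * l' * u' = p * (g * l * u) * q →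
      ∃ a ∈ L', ∃ c ∈ U', ∃ b ∈ L' ⊓ K, ∃ k ∈ U' ⊓ K, g * a * g⁻¹ ∈ P ∧ g * c * g⁻¹ ∈ P ∧
        l' = a * l * b ∧ l' * u' = a * c * l * u * b * k := by
    intro g l l' u u' p q hl hl' hu hu' hp hq h
    have h1 : g * (g⁻¹ * p * g) * g⁻¹ ∈ P := by
      rwa [show g * (g⁻¹ * p * g) * g⁻¹ = p by group]
    have h2 : g⁻¹ * p * g = l' * u' * q⁻¹ * u⁻¹ * l⁻¹ := by
      have : p = g * l' * u' * q⁻¹ * (g * l * u)⁻¹ := by rw [h]; group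
      rw [this]; group
    have h3 : g⁻¹ * p * g ∈ P' := by
      rw [h2]
      exact P'.mul_mem (P'.mul_mem (P'.mul_mem (P'.mul_mem (hL' hl') (hU' hu')) (P'.inv_mem hq.1))
        (P'.inv_mem (hU' hu))) (P'.inv_mem (hL' hl))
    obtain ⟨a, ha, c, hc, ha', hc', hac⟩ := hLevi' g _ h1 h3
    obtain ⟨b, hb, k, hk, rfl⟩ := hQ' q hq
    have h4 : l' * u' = a * c * l * u * b * k := by
      rw [hac, h2]; group
    refine ⟨a, ha, c, hc, b, hb, k, hk, ha', hc', ?_, h4⟩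
    refine hLU l' hl' (a * l * b) (L'.mul_mem (L'.mul_mem ha hl) hb.1) u' hu'
      (((l * b)⁻¹ * c * (l * b)) * (b⁻¹ * u * b) * k) ?_ ?_
    · exact U'.mul_mem (U'.mul_mem (hNormal2 _ (hL' (L'.mul_mem hl hb.1)) _ hc)
        (hNormal2 _ (hL' hb.1) _ hu)) hk.1
    · rw [h4]; group
  refine ⟨?_, ?_⟩
  · rintro w hw v hv m ⟨hm, hm'⟩ u hu
    exact ⟨hNormal m (hL' hm'.1) u hu, hConj (w * v) m hm hm' u⟩
  let c : ∀ g, ↥(unipotentDoubleCosets P U' (U' ⊓ K) g) → G := fun g d => d.2.choose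
  have hcU : ∀ g d, c g d ∈ U' := fun g d => d.2.choose_spec.1
  have hcd : ∀ g (d : ↥(unipotentDoubleCosets P U' (U' ⊓ K) g)), (d : Set G) =
      ({x : G | g * x * g⁻¹ ∈ P} ∩ (↑U' : Set G)) * {c g d} * (↑(U' ⊓ K) : Set G) :=
    fun g d => d.2.choose_spec.2
  have hcmem : ∀ g (d : ↥(unipotentDoubleCosets P U' (U' ⊓ K) g)), c g d ∈ (d : Set G) := by
    intro g d
    rw [hcd g d, dfo_mem_doset]
    exact ⟨1, 1, by simp, U'.one_mem, Subgroup.one_mem _, by simp⟩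
  let f : ∀ g, Quot (conjDosetRel P U' (U' ⊓ K) (L' ⊓ K) g) →
      Quotient (MulAction.orbitRel ↥K ((G ⧸ P) × (↥K ⧸ (P' ⊓ K).subgroupOf K))) := fun g =>
    Quot.lift (fun d => dfoOrb K P P' (g * c g d)) (by
      rintro d d' ⟨m, ⟨hm, hm'⟩, h⟩
      have h1 := hcmem g d'
      rw [h] at h1
      obtain ⟨y, hy, h2⟩ := h1
      rw [hcd g d, dfo_mem_doset] at hy
      obtain ⟨n, k, hn, hn', hk, rfl⟩ := hy
      refine (dfoOrb_eq K P P' _ _).2 ⟨_, dfo_mul_mem P hm hn, k * m⁻¹,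
        Subgroup.mul_mem _ (hQU k hk) (Subgroup.inv_mem _ (hQL m hm')), ?_⟩
      rw [← h2]
      group)
  let F : (Σ (w : W) (v : V (w : G)),
      Quot (conjDosetRel P U' (U' ⊓ K) (L' ⊓ K) ((w : G) * (v : G)))) →
      Quotient (MulAction.orbitRel ↥K ((G ⧸ P) × (↥K ⧸ (P' ⊓ K).subgroupOf K))) :=
    fun s => f _ s.2.2
  refine ⟨(Equiv.ofBijective F ⟨?_, ?_⟩).symm⟩
  · rintro ⟨⟨w, hw⟩, ⟨v, hv⟩, d⟩ ⟨⟨w', hw'⟩, ⟨v', hv'⟩, d'⟩ h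
    induction d using Quot.inductionOn with
    | h d =>
    induction d' using Quot.inductionOn with
    | h d' =>
    change dfoOrb K P P' (w * v * c (w * v) d) = dfoOrb K P P' (w' * v' * c (w' * v') d') at h
    rw [dfoOrb_eq] at h
    obtain ⟨p, hp, q, hq, h⟩ := h
    have hvL : v ∈ L' := hV₀ w hw hv
    have hvL' : v' ∈ L' := hV₀ w' hw' hv'
    have hww : w = w' := by
      refine hW₂ w hw w' hw' ⟨p * w, ⟨p, hp, w, rfl, rfl⟩,
        v * c _ d * q * (c _ d')⁻¹ * v'⁻¹, ?_, ?_⟩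
      · exact P'.mul_mem (P'.mul_mem (P'.mul_mem (P'.mul_mem (hL' hvL) (hU' (hcU _ _))) hq.1)
          (P'.inv_mem (hU' (hcU _ _)))) (P'.inv_mem (hL' hvL'))
      · have : w' = p * (w * v * c (w * v) d) * q * (c (w' * v') d')⁻¹ * v'⁻¹ := by
          rw [← h]; group
        simp only [mul_assoc] at this ⊢
        exact this.symm
    subst hww
    have hvv : v = v' := by
      obtain ⟨a, ha, e, he, b, hb, k, hk, hga, hge, h1, h2⟩ :=
        hKey w v v' _ _ p q hvL hvL' (hcU _ d) (hcU _ d') hp hq h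
      exact hV₂ w hw v hv v' hv' ((dfo_mem_doset P L' (L' ⊓ K) w v v').2
        ⟨a, b, hga, ha, hb, h1⟩)
    subst hvv
    have : Quot.mk (conjDosetRel P U' (U' ⊓ K) (L' ⊓ K) (w * v)) d = Quot.mk _ d' := by
      apply Quot.sound
      obtain ⟨a, ha, e, he, b, hb, k, hk, hga, hge, h1, h2⟩ :=
        hKey (w * v) 1 1 _ _ p q L'.one_mem L'.one_mem (hcU _ d) (hcU _ d') hp hq
          (by simpa using h)
      have hab : b = a⁻¹ := by
        rw [mul_one] at h1
        exact eq_inv_of_mul_eq_one_right h1.symm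
      subst hab
      have haK : a ∈ L' ⊓ K := by simpa using Subgroup.inv_mem _ hb
      refine ⟨a, ⟨hga, haK⟩, ?_⟩
      rw [hcd _ d, hConj (w * v) a hga haK, hcd _ d']
      have h3 : c (w * v) d' = (a * e * a⁻¹) * (a * c (w * v) d * a⁻¹) * k := by
        rw [one_mul] at h2
        rw [h2]; group
      rw [h3]
      exact dfo_doset_eq P U' (U' ⊓ K) _ _ _ _
        (dfo_mul_mem P (dfo_mul_mem P hga hge) (dfo_inv_mem P hga))
        (hNormal a (hL' ha) e he) hk
    rw [this]
  · intro o
    obtain ⟨x, rfl⟩ := dfoOrb_surj K P P' o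
    obtain ⟨w, hw, hx⟩ := hW₁ x
    have hx' : ∃ p ∈ P, ∃ r ∈ (↑P' : Set G), x = p * w * r := by
      obtain ⟨_, ⟨p, hp, _, rfl, rfl⟩, r, hr, rfl⟩ := hx
      exact ⟨p, hp, r, hr, rfl⟩
    obtain ⟨p, hp, r, hr, rfl⟩ := hx'
    rw [← hGen] at hr
    obtain ⟨l, hl, u, hu, rfl⟩ := hr
    obtain ⟨v, hv, hlv⟩ := hV₁ w hw l hl
    obtain ⟨a, b, ha, ha', hb, rfl⟩ := (dfo_mem_doset P L' (L' ⊓ K) w v l).1 hlv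
    have hu' : b * u * b⁻¹ ∈ U' := hNormal b (hL' hb.1) u hu
    let d : ↥(unipotentDoubleCosets P U' (U' ⊓ K) (w * v)) := ⟨_, b * u * b⁻¹, hu', rfl⟩
    refine ⟨⟨⟨w, hw⟩, ⟨v, hv⟩, Quot.mk _ d⟩, ?_⟩
    change dfoOrb K P P' (w * v * c (w * v) d) = _
    have h1 := hcmem _ d
    rw [dfo_mem_doset] at h1
    obtain ⟨n, k, hn, hn', hk, h1⟩ := h1
    rw [h1]
    symm
    rw [dfoOrb_eq]
    refine ⟨(w * v * n * (w * v)⁻¹) * (w * a * w⁻¹)⁻¹ * p⁻¹,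
      P.mul_mem (P.mul_mem hn (P.inv_mem ha)) (P.inv_mem hp), b⁻¹ * k,
      Subgroup.mul_mem _ (Subgroup.inv_mem _ (hQL b hb)) (hQU k hk), ?_⟩
    simp only [mul_assoc, mul_inv_rev, inv_inv, inv_mul_cancel_left]
end

section
/- Let G be a group, K and P subgroups of G, and P' a subgroup of G that is the internal semidirect product of a subgroup L' and a normal subgroup U' of P'. Set L'_K = L' ∩ K, U'_K = U' ∩ K, and Q = P' ∩ K. Assume: (i) Q = L'_K U'_K; (ii) for every g ∈ G, g⁻¹Pg ∩ P' = (g⁻¹Pg ∩ L')(g⁻¹Pg ∩ U'); (iii) the double coset space P\G/P' is finite; and (iv) for every w ∈ G, the double coset space ((w⁻¹Pw) ∩ L')\L'/L'_K is finite. Then the set of K-orbits on (G/P) × (K/Q) under the diagonal K-action is finite if and only if for every g ∈ P W L' (equivalently, for every g of the form wv with w a representative of a double coset in P\G/P' and v ∈ L' a representative of a double coset in ((w⁻¹Pw) ∩ L')\L'/L'_K), the conjugation action of g⁻¹Pg ∩ L'_K on the double coset space (g⁻¹Pg ∩ U')\U'/U'_K has only finitely many orbits. -/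
open Pointwise

theorem aux_finite_cover {α β : Type*} [Nonempty α] (f : α → β) (A : Set α) (h : (f '' A).Finite) :
    ∃ T : Set α, T.Finite ∧ T ⊆ A ∧ ∀ x ∈ A, ∃ t ∈ T, f t = f x := by
  choose! r hr using fun (d : β) (hd : d ∈ f '' A) => hd
  refine ⟨r '' (f '' A), h.image r, ?_, ?_⟩
  · rintro _ ⟨d, hd, rfl⟩
    exact (hr d hd).1
  · intro x hx
    exact ⟨r (f x), ⟨f x, ⟨x, hx, rfl⟩, rfl⟩, (hr (f x) ⟨x, hx, rfl⟩).2⟩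

theorem aux_mem_doset {G : Type*} [Group G] (A B : Set G) (u x : G) :
    x ∈ A * {u} * B ↔ ∃ a ∈ A, ∃ b ∈ B, x = a * u * b := by
  constructor
  · rintro ⟨_, ⟨a, ha, _, rfl, rfl⟩, b, hb, rfl⟩
    exact ⟨a, ha, b, hb, rfl⟩
  · rintro ⟨a, ha, b, hb, rfl⟩
    exact ⟨_, ⟨a, ha, _, rfl, rfl⟩, b, hb, rfl⟩

theorem aux_orbits {G : Type*} [Group G] (K P P' : Subgroup G) :
    Finite (Quotient (MulAction.orbitRel ↥K ((G ⧸ P) × (↥K ⧸ (P' ⊓ K).subgroupOf K))))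
      ↔ ∃ S : Set G, S.Finite ∧ ∀ x, ∃ s ∈ S, ∃ p ∈ P, ∃ q ∈ P' ⊓ K, x = p * s * q := by
  constructor
  · intro hfin
    have key : ∀ o : Quotient (MulAction.orbitRel ↥K
        ((G ⧸ P) × (↥K ⧸ (P' ⊓ K).subgroupOf K))), ∃ s : G, ∀ x : G,
        (Quotient.mk (MulAction.orbitRel ↥K ((G ⧸ P) × (↥K ⧸ (P' ⊓ K).subgroupOf K)))
          ((x⁻¹ : G), ((1 : K) : ↥K ⧸ (P' ⊓ K).subgroupOf K))) = o →
        ∃ p ∈ P, ∃ q ∈ P' ⊓ K, x = p * s * q := by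
      intro o
      induction o using Quotient.inductionOn with
      | h y =>
      obtain ⟨a, k⟩ := y
      induction a using QuotientGroup.induction_on with
      | H a =>
      induction k using QuotientGroup.induction_on with
      | H k =>
      refine ⟨a⁻¹ * k, fun x hx => ?_⟩
      obtain ⟨c, hc⟩ := MulAction.orbitRel_apply.mp (Quotient.exact hx)
      have h1 : ((((c : G) * a : G)) : G ⧸ P) = ((x⁻¹ : G) : G ⧸ P) := congrArg Prod.fst hc
      have h2 : (((c * k : K)) : ↥K ⧸ (P' ⊓ K).subgroupOf K) = ((1 : K)) :=
        congrArg Prod.snd hc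
      rw [QuotientGroup.eq] at h1 h2
      rw [Subgroup.mem_subgroupOf] at h2
      refine ⟨_, P.inv_mem h1, _, h2, ?_⟩
      push_cast
      group
    choose s hs using key
    refine ⟨Set.range s, Set.finite_range s, fun x => ?_⟩
    exact ⟨_, ⟨_, rfl⟩, hs _ x rfl⟩
  · rintro ⟨S, hS, hcov⟩
    have := hS.to_subtype
    refine Finite.of_surjective (fun s : S =>
      (Quotient.mk (MulAction.orbitRel ↥K ((G ⧸ P) × (↥K ⧸ (P' ⊓ K).subgroupOf K)))
          (((s : G)⁻¹ : G), ((1 : K) : ↥K ⧸ (P' ⊓ K).subgroupOf K)))) ?_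
    intro o
    induction o using Quotient.inductionOn with
    | h y =>
    obtain ⟨a, k⟩ := y
    induction a using QuotientGroup.induction_on with
    | H a =>
    induction k using QuotientGroup.induction_on with
    | H k =>
    obtain ⟨s, hs, p, hp, q, hq, h⟩ := hcov (a⁻¹ * k)
    refine ⟨⟨s, hs⟩, Quotient.sound (MulAction.orbitRel_apply.mpr ⟨⟨q, hq.2⟩ * k⁻¹, ?_⟩)⟩
    have ha : a = k * q⁻¹ * s⁻¹ * p⁻¹ := by
      have : a = k * (a⁻¹ * k)⁻¹ := by group
      rw [this, h]; group
    refine Prod.ext ?_ ?_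
    · change (((q * (k : G)⁻¹) * a : G) : G ⧸ P) = ((s⁻¹ : G) : G ⧸ P)
      rw [QuotientGroup.eq, ha]
      convert hp using 1
      group
    · change ((((⟨q, hq.2⟩ : K) * k⁻¹) * k : K) : ↥K ⧸ (P' ⊓ K).subgroupOf K) = ((1 : K))
      rw [QuotientGroup.eq, Subgroup.mem_subgroupOf]
      simpa using hq

theorem aux_conj {G : Type*} [Group G] (P U' UK LK : Subgroup G) (g : G)
    (hUK : UK ≤ U')
    (hN : ∀ m ∈ LK, ∀ u ∈ U', m * u * m⁻¹ ∈ U')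
    (hNK : ∀ m ∈ LK, ∀ u ∈ UK, m * u * m⁻¹ ∈ UK) :
    Finite (Quot (conjDosetRel P U' UK LK g)) ↔
      ∃ T : Set G, T.Finite ∧ T ⊆ U' ∧ ∀ u ∈ U', ∃ t ∈ T, ∃ m ∈ LK, g * m * g⁻¹ ∈ P ∧
        ∃ a ∈ U', g * a * g⁻¹ ∈ P ∧ ∃ b ∈ UK, u = a * (m * t * m⁻¹) * b := by
  let H : Subgroup G := P.comap (MulAut.conj g).toMonoidHom
  have hH : ∀ x, g * x * g⁻¹ ∈ P ↔ x ∈ H := fun x => Iff.rfl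
  have hHs : {x : G | g * x * g⁻¹ ∈ P} = (H : Set G) := rfl
  constructor
  · intro hfin
    have key : ∀ o : Quot (conjDosetRel P U' UK LK g), ∃ t ∈ U', ∀ u (hu : u ∈ U'),
        Quot.mk (conjDosetRel P U' UK LK g) ⟨_, u, hu, rfl⟩ = o →
        ∃ m ∈ LK, g * m * g⁻¹ ∈ P ∧
        ∃ a ∈ U', g * a * g⁻¹ ∈ P ∧ ∃ b ∈ UK, u = a * (m * t * m⁻¹) * b := by
      intro o
      induction o using Quot.inductionOn with
      | h d =>
      obtain ⟨d, t, ht, rfl⟩ := d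
      refine ⟨t, ht, fun u hu h => ?_⟩
      have hequiv : Equivalence (conjDosetRel P U' UK LK g) := by
        refine ⟨?_, ?_, ?_⟩
        · intro d
          exact ⟨1, ⟨H.one_mem, LK.one_mem⟩, by simp⟩
        · rintro d d' ⟨m, ⟨hm1, hm2⟩, e⟩
          refine ⟨m⁻¹, ⟨H.inv_mem hm1, LK.inv_mem hm2⟩, ?_⟩
          rw [e, Set.image_image]
          simp [mul_assoc]
        · rintro d d' d'' ⟨m, ⟨hm1, hm2⟩, e⟩ ⟨n, ⟨hn1, hn2⟩, e'⟩
          refine ⟨n * m, ⟨H.mul_mem hn1 hm1, LK.mul_mem hn2 hm2⟩, ?_⟩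
          rw [e', e, Set.image_image]
          simp [mul_assoc]
      have h' := hequiv.symm (Quot.eqvGen_exact h |> hequiv.eqvGen_iff.mp)
      obtain ⟨m, ⟨hm1, hm2⟩, e⟩ := h'
      have hmem : u ∈ ({x : G | g * x * g⁻¹ ∈ P} ∩ (↑U' : Set G)) * {u} * ↑UK :=
        (aux_mem_doset _ _ _ _).2 ⟨1, ⟨H.one_mem, U'.one_mem⟩, 1, UK.one_mem, by simp⟩
      have hmem2 := e.subset hmem
      obtain ⟨x, hx, rfl⟩ := hmem2
      obtain ⟨a, ⟨ha1, ha2⟩, b, hb, rfl⟩ := (aux_mem_doset _ _ _ _).1 hx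
      refine ⟨m, hm2, hm1, m * a * m⁻¹, hN m hm2 a ha2,
        H.mul_mem (H.mul_mem hm1 ha1) (H.inv_mem hm1), m * b * m⁻¹, hNK m hm2 b hb, ?_⟩
      simp only [mul_assoc, inv_mul_cancel_left]
    choose s hsU hs using key
    refine ⟨Set.range s, Set.finite_range s, ?_, fun u hu => ?_⟩
    · rintro _ ⟨o, rfl⟩
      exact hsU o
    · exact ⟨_, ⟨_, rfl⟩, hs _ u hu rfl⟩
  · rintro ⟨T, hT, hTU, hcov⟩
    have := hT.to_subtype
    refine Finite.of_surjective (fun t : T =>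
      Quot.mk (conjDosetRel P U' UK LK g) ⟨_, t, hTU t.2, rfl⟩) ?_
    intro o
    induction o using Quot.inductionOn with
    | h d =>
    obtain ⟨d, u, hu, rfl⟩ := d
    obtain ⟨t, ht, m, hm, hmP, a, ha, haP, b, hb, rfl⟩ := hcov u hu
    refine ⟨⟨t, ht⟩, Quot.sound ⟨m, ⟨hmP, hm⟩, ?_⟩⟩
    have hm' := LK.inv_mem hm
    have hmH : m ∈ H := hmP
    have haH : a ∈ H := haP
    ext x
    constructor
    · intro hx
      obtain ⟨c, ⟨hc1, hc2⟩, e, he, rfl⟩ := (aux_mem_doset _ _ _ _).1 hx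
      refine ⟨(m⁻¹ * (c * a) * m) * t * (m⁻¹ * (b * e) * m),
        (aux_mem_doset _ _ _ _).2 ⟨_, ⟨?_, ?_⟩, _, ?_, rfl⟩, ?_⟩
      · exact H.mul_mem (H.mul_mem (H.inv_mem hmH) (H.mul_mem hc1 haH)) hmH
      · simpa using hN _ hm' _ (U'.mul_mem hc2 ha)
      · simpa using hNK _ hm' _ (UK.mul_mem hb he)
      · simp [mul_assoc]
    · rintro ⟨y, hy, rfl⟩
      obtain ⟨c, ⟨hc1, hc2⟩, e, he, rfl⟩ := (aux_mem_doset _ _ _ _).1 hy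
      refine (aux_mem_doset _ _ _ _).2 ⟨m * c * m⁻¹ * a⁻¹, ⟨?_, ?_⟩, b⁻¹ * (m * e * m⁻¹), ?_, ?_⟩
      · exact H.mul_mem (H.mul_mem (H.mul_mem hmH hc1) (H.inv_mem hmH)) (H.inv_mem haH)
      · exact U'.mul_mem (hN m hm c hc2) (U'.inv_mem ha)
      · exact UK.mul_mem (UK.inv_mem hb) (hNK m hm e he)
      · simp [mul_assoc]

/-- Finiteness criterion for double flag varieties: under the setup of
the orbit parametrization (with `P' = L' ⋉ U'`, `Q = P' ∩ K = L'_K U'_K`,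
`g⁻¹Pg ∩ P' = (g⁻¹Pg ∩ L')(g⁻¹Pg ∩ U')`, `P\G/P'` finite, each
`((w⁻¹Pw) ∩ L')\L'/L'_K` finite, and `W` a system of representatives for `P\G/P'`),
the set of `K`-orbits on `(G/P) × (K/Q)` is finite if and only if for every
`g ∈ P W L'` the conjugation action of `g⁻¹Pg ∩ L'_K` on the double coset space
`(g⁻¹Pg ∩ U')\U'/U'_K` has only finitely many orbits. -/
theorem double_flag_finite_type_iff {G : Type*} [Group G]
    (K P P' L' U' : Subgroup G)
    (hL' : L' ≤ P') (hU' : U' ≤ P')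
    (hNormal : ∀ p ∈ P', ∀ u ∈ U', p * u * p⁻¹ ∈ U')
    (hInt : L' ⊓ U' = ⊥)
    (hGen : (↑L' : Set G) * (↑U' : Set G) = (↑P' : Set G))
    (hQ : (↑(P' ⊓ K) : Set G) = (↑(L' ⊓ K) : Set G) * (↑(U' ⊓ K) : Set G))
    (hLevi : ∀ g : G,
      ({x : G | g * x * g⁻¹ ∈ P} ∩ (↑P' : Set G))
        = ({x : G | g * x * g⁻¹ ∈ P} ∩ (↑L' : Set G)) *
          ({x : G | g * x * g⁻¹ ∈ P} ∩ (↑U' : Set G)))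
    (hFin₁ : {d : Set G | ∃ x : G, d = (↑P : Set G) * {x} * (↑P' : Set G)}.Finite)
    (hFin₂ : ∀ w : G,
      {d : Set G | ∃ l ∈ L',
        d = ({x : G | w * x * w⁻¹ ∈ P} ∩ (↑L' : Set G)) * {l} * ↑(L' ⊓ K)}.Finite)
    (W : Set G)
    (hW₁ : ∀ x : G, ∃ w ∈ W, x ∈ (↑P : Set G) * {w} * (↑P' : Set G))
    (hW₂ : ∀ w ∈ W, ∀ w' ∈ W, w' ∈ (↑P : Set G) * {w} * (↑P' : Set G) → w = w') :
    Finite (Quotient (MulAction.orbitRel ↥K ((G ⧸ P) × (↥K ⧸ (P' ⊓ K).subgroupOf K))))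
      ↔ ∀ g ∈ (↑P : Set G) * W * (↑L' : Set G),
          Finite (Quot (conjDosetRel P U' (U' ⊓ K) (L' ⊓ K) g)) := by
  have hNLK : ∀ m ∈ L' ⊓ K, ∀ u ∈ U', m * u * m⁻¹ ∈ U' :=
    fun m hm u hu => hNormal m (hL' hm.1) u hu
  have hNK : ∀ m ∈ L' ⊓ K, ∀ u ∈ U' ⊓ K, m * u * m⁻¹ ∈ U' ⊓ K :=
    fun m hm u hu => ⟨hNormal m (hL' hm.1) u hu.1,
      K.mul_mem (K.mul_mem hm.2 hu.2) (K.inv_mem hm.2)⟩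
  have hconj := fun g => aux_conj P U' (U' ⊓ K) (L' ⊓ K) g inf_le_left hNLK hNK
  rw [aux_orbits]
  constructor
  · rintro ⟨S, hS, hcov⟩ g -
    rw [hconj]
    have key : ∀ s : G, (∃ t ∈ U', ∃ p ∈ P, ∃ q ∈ P' ⊓ K, g * t = p * s * q) →
        ∃ t ∈ U', ∃ p ∈ P, ∃ q ∈ P' ⊓ K, g * t = p * s * q := fun s h => h
    choose! r hrU hr using key
    refine ⟨r '' {s ∈ S | ∃ t ∈ U', ∃ p ∈ P, ∃ q ∈ P' ⊓ K, g * t = p * s * q},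
      (hS.subset (Set.sep_subset _ _)).image r, ?_, ?_⟩
    · rintro _ ⟨s, hs, rfl⟩
      exact hrU s hs.2
    · intro u hu
      obtain ⟨s, hs, p, hp, q, hq, e⟩ := hcov (g * u)
      have hex : ∃ t ∈ U', ∃ p ∈ P, ∃ q ∈ P' ⊓ K, g * t = p * s * q :=
        ⟨u, hu, p, hp, q, hq, e⟩
      refine ⟨r s, ⟨s, ⟨hs, hex⟩, rfl⟩, ?_⟩
      have ht := hrU s hex
      obtain ⟨p₁, hp₁, q₁, hq₁, e₁⟩ := hr s hex
      generalize r s = t at ht e₁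
      have hq2 : q₁⁻¹ * q ∈ (↑(P' ⊓ K) : Set G) := (P' ⊓ K).mul_mem ((P' ⊓ K).inv_mem hq₁) hq
      rw [hQ] at hq2
      obtain ⟨l, hl, v, hv, hlv⟩ := hq2
      have hl : l ∈ L' ⊓ K := hl
      have hv : v ∈ U' ⊓ K := hv
      simp only at hlv
      have hqe : q = q₁ * l * v := by rw [mul_assoc, hlv]; group
      have hc : l * (u * v⁻¹) * l⁻¹ * t⁻¹ ∈ U' :=
        U'.mul_mem (hNLK l hl _ (U'.mul_mem hu (U'.inv_mem hv.1))) (U'.inv_mem ht)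
      have hs' : s = p₁⁻¹ * (g * t) * q₁⁻¹ := by rw [e₁]; group
      have hu' : u = g⁻¹ * (p * p₁⁻¹) * g * t * l * v := by
        have : u = g⁻¹ * (g * u) := by group
        rw [this, e, hs', hqe]; group
      have hmem : l⁻¹ * (l * (u * v⁻¹) * l⁻¹ * t⁻¹) ∈
          ({x : G | g * x * g⁻¹ ∈ P} ∩ (↑P' : Set G)) := by
        refine ⟨?_, P'.mul_mem (P'.inv_mem (hL' hl.1)) (hU' hc)⟩
        change g * _ * g⁻¹ ∈ P
        have : g * (l⁻¹ * (l * (u * v⁻¹) * l⁻¹ * t⁻¹)) * g⁻¹ = p * p₁⁻¹ := by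
          rw [hu']; group
        rw [this]
        exact P.mul_mem hp (P.inv_mem hp₁)
      rw [hLevi g] at hmem
      obtain ⟨l₂, ⟨hl₂P, hl₂⟩, c₂, ⟨hc₂P, hc₂⟩, h2⟩ := hmem
      simp only at h2
      have hl₂ : l₂ ∈ L' := hl₂
      have hc₂ : c₂ ∈ U' := hc₂
      have hone : l * l₂ ∈ L' ⊓ U' := by
        refine ⟨L'.mul_mem hl.1 hl₂, ?_⟩
        have : l * l₂ = (l * (u * v⁻¹) * l⁻¹ * t⁻¹) * c₂⁻¹ := by
          have : l * l₂ = l * (l₂ * c₂) * c₂⁻¹ := by group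
          rw [this, h2]; group
        rw [this]
        exact U'.mul_mem hc (U'.inv_mem hc₂)
      rw [hInt, Subgroup.mem_bot] at hone
      have hl₂e : l₂ = l⁻¹ := (inv_eq_of_mul_eq_one_right hone).symm
      subst hl₂e
      have hc₂e := mul_left_cancel h2
      have hl' := (L' ⊓ K).inv_mem hl
      refine ⟨l⁻¹, hl', hl₂P, l⁻¹ * c₂ * l, ?_, ?_, v, hv, ?_⟩
      · simpa using hNLK _ hl' _ hc₂
      · have : g * (l⁻¹ * c₂ * l) * g⁻¹ =
            (g * l⁻¹ * g⁻¹) * (g * c₂ * g⁻¹) * (g * l⁻¹ * g⁻¹)⁻¹ := by group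
        rw [this]
        exact P.mul_mem (P.mul_mem hl₂P hc₂P) (P.inv_mem hl₂P)
      · rw [hc₂e]; group
  · intro hfin
    obtain ⟨T₁, hT₁, -, hcov₁⟩ := aux_finite_cover
      (fun x : G => (↑P : Set G) * {x} * (↑P' : Set G)) Set.univ
      (hFin₁.subset (by rintro _ ⟨x, -, rfl⟩; exact ⟨x, rfl⟩))
    choose ω hωW hω using hW₁
    have hV := fun w => aux_finite_cover
      (fun l : G => ({x : G | w * x * w⁻¹ ∈ P} ∩ (↑L' : Set G)) * {l} * (↑(L' ⊓ K) : Set G))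
      (L' : Set G) ((hFin₂ w).subset (by rintro _ ⟨x, hx, rfl⟩; exact ⟨x, hx, rfl⟩))
    choose V hVfin hVL hV using hV
    have hT := fun g hg => (hconj g).1 (hfin g hg)
    choose! T hTfin hTU hT using hT
    have hg : ∀ w ∈ W, ∀ v ∈ L', w * v ∈ (↑P : Set G) * W * (↑L' : Set G) :=
      fun w hw v hv => ⟨w, ⟨1, P.one_mem, w, hw, by simp⟩, v, hv, rfl⟩
    refine ⟨⋃ y ∈ T₁, ⋃ v ∈ V (ω y), (fun t => ω y * v * t) '' T (ω y * v), ?_, ?_⟩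
    · refine hT₁.biUnion fun y _ => (hVfin _).biUnion fun v hv => ?_
      exact (hTfin _ (hg _ (hωW y) v (hVL _ hv))).image _
    · intro x
      obtain ⟨y, hy, hxy⟩ := hcov₁ x trivial
      have hx : x ∈ (↑P : Set G) * {y} * (↑P' : Set G) := by
        have : x ∈ (↑P : Set G) * {x} * (↑P' : Set G) :=
          (aux_mem_doset _ _ _ _).2 ⟨1, P.one_mem, 1, P'.one_mem, by simp⟩
        exact hxy.symm.subset this
      obtain ⟨p₁, hp₁, p₁', hp₁', e₁⟩ := (aux_mem_doset _ _ _ _).1 hx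
      obtain ⟨p₂, hp₂, p₂', hp₂', e₂⟩ := (aux_mem_doset _ _ _ _).1 (hω y)
      have hp' : p₂' * p₁' ∈ (P' : Set G) := P'.mul_mem hp₂' hp₁'
      rw [← hGen] at hp'
      obtain ⟨l, hl, u, hu, hlu⟩ := hp'
      simp only at hlu
      obtain ⟨v, hv, hvl⟩ := hV (ω y) l hl
      have hl2 : l ∈ ({x : G | ω y * x * (ω y)⁻¹ ∈ P} ∩ (↑L' : Set G)) * {l} *
          (↑(L' ⊓ K) : Set G) :=
        (aux_mem_doset _ _ _ _).2 ⟨1, ⟨by simp [P.one_mem], L'.one_mem⟩, 1,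
          (L' ⊓ K).one_mem, by simp⟩
      obtain ⟨a, ⟨haP, haL⟩, k, hk, e₃⟩ := (aux_mem_doset _ _ _ _).1 (hvl.symm.subset hl2)
      have hgv := hg _ (hωW y) v (hVL _ hv)
      have hk : k ∈ L' ⊓ K := hk
      obtain ⟨t, ht, m, hm, hmP, a', ha', ha'P, b, hb, e₄⟩ :=
        hT _ hgv (k * u * k⁻¹) (hNLK k hk u hu)
      refine ⟨ω y * v * t, ?_, p₁ * p₂ * (ω y * a * (ω y)⁻¹) *
        ((ω y * v) * a' * (ω y * v)⁻¹) * ((ω y * v) * m * (ω y * v)⁻¹), ?_,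
        m⁻¹ * b * k, ?_, ?_⟩
      · simp only [Set.mem_iUnion]
        exact ⟨y, hy, v, hv, t, ht, rfl⟩
      · exact P.mul_mem (P.mul_mem (P.mul_mem (P.mul_mem hp₁ hp₂) haP) ha'P) hmP
      · have hm' := (L' ⊓ K).inv_mem hm
        exact (P' ⊓ K).mul_mem ((P' ⊓ K).mul_mem ⟨hL' hm'.1, hm'.2⟩ ⟨hU' hb.1, hb.2⟩)
          ⟨hL' hk.1, hk.2⟩
      · have hu2 : u = k⁻¹ * (k * u * k⁻¹) * k := by group
        have hx2 : x = p₁ * p₂ * ω y * (p₂' * p₁') := by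
          rw [e₁]; nth_rw 1 [e₂]; group
        rw [hx2, ← hlu, e₃, hu2, e₄]
        group
end
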